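/- Let A = Σ a_i X^i, B = Σ b_i X^i ∈ D[X] have degree d and valuation 0, let (S_i)_{−1 ≤ i ≤ d} be their sequence of symmetric subresultants, and suppose the pair (S_j, S_{j+1}) is (α,β)-defective. If j > 0, then lc(S_j)·S_j(0)·S_{j+α+β+1} = −lc(S_{j+1})·S_{j+α+β}(0)·srem(S_j, S_{j+1}) = −srem(lc(S_{j+1})·S_{j+α+β}(0)·S_j, S_{j+1}). If j = 0, then b_d·S_{α+β+1} = −srem(lc(S_1)·S_{α+β}(0)·S_0, S_1). -/

import Mathlib

open Polynomial

/-- The `2j × 2j` square submatrix `Sylv_{j,ℓ}(A,B)` of the Sylvester-type matrix of `A` and `B`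
(of formal degree `d`): rows are the coefficient vectors of `A, XA, …, X^{j-1}A, B, …, X^{j-1}B`,
keeping the columns of degrees `0, …, j-2`, the column of degree `j-1+ℓ`, and the columns of
degrees `d, …, d+j-1`. -/
noncomputable def sylvMat {R : Type*} [CommRing R] (A B : R[X]) (d j ℓ : ℕ) :
    Matrix (Fin (2 * j)) (Fin (2 * j)) R := fun r c =>
  (if (r : ℕ) < j then X ^ (r : ℕ) * A else X ^ ((r : ℕ) - j) * B).coeff
    (if (c : ℕ) < j - 1 then (c : ℕ)
     else if (c : ℕ) = j - 1 then j - 1 + ℓ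
     else d + ((c : ℕ) - j))

/-- The sequence of symmetric subresultants of `A` and `B` (of formal degree `d`):
`S_0 = B` and `S_j = ∑_{ℓ=0}^{d-j} det (Sylv_{j,ℓ}(A,B)) · X^ℓ` for `1 ≤ j`. -/
noncomputable def symSubres {R : Type*} [CommRing R] (A B : R[X]) (d j : ℕ) : R[X] :=
  if j = 0 then B
  else ∑ ℓ ∈ Finset.range (d - j + 1), C (sylvMat A B d j ℓ).det * X ^ ℓ

/-- The pair `(S_j, S_{j+1})` of symmetric subresultants of `A`, `B` (formal degree `d`) is
`(α,β)`-defective: `v(S_j) = 0`, `deg S_j = d - j`, `v(S_{j+1}) = α`, `deg S_{j+1} = d - j - β`. -/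
def IsDefective {R : Type*} [CommRing R] (A B : R[X]) (d j α β : ℕ) : Prop :=
  (symSubres A B d j).coeff 0 ≠ 0 ∧
  (symSubres A B d j).natDegree + j = d ∧
  symSubres A B d (j + 1) ≠ 0 ∧
  (symSubres A B d (j + 1)).natTrailingDegree = α ∧
  (symSubres A B d (j + 1)).natDegree + β + j = d

/-- The functional sending a vector to the determinant with that vector as column `m`. -/
noncomputable def colFun {R : Type*} [CommRing R] (A B : R[X]) (d m : ℕ) (v : Fin (2 * (m + 1)) → R) : R :=
  ((sylvMat A B d (m + 1) 0).updateCol ⟨m, by omega⟩ v).det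

lemma colFun_sum {R : Type*} [CommRing R] (A B : R[X]) (d m : ℕ) (v : Fin (2 * (m + 1)) → R) :
    colFun A B d m v = ∑ r, colFun A B d m (Pi.single r 1) * v r := by
  have h : ∀ w, colFun A B d m w = (sylvMat A B d (m + 1) 0).cramer w ⟨m, by omega⟩ := by
    intro w; rw [Matrix.cramer_apply]; rfl
  simp only [h]
  conv_lhs => rw [Matrix.cramer_eq_adjugate_mulVec]
  simp only [Matrix.mulVec, dotProduct]
  refine Finset.sum_congr rfl fun r _ => ?_
  rw [Matrix.cramer_eq_adjugate_mulVec, Matrix.mulVec_single_one]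
  rfl

/-- The column of degree `n`. -/
noncomputable def degCol {R : Type*} [CommRing R] (A B : R[X]) (m n : ℕ) : Fin (2 * (m + 1)) → R :=
  fun r => (if (r : ℕ) < m + 1 then X ^ (r : ℕ) * A else X ^ ((r : ℕ) - (m + 1)) * B).coeff n

lemma colFun_degCol {R : Type*} [CommRing R] (A B : R[X]) (d m l : ℕ) :
    colFun A B d m (degCol A B m (m + l)) = (sylvMat A B d (m + 1) l).det := by
  unfold colFun
  congr 1
  ext r c
  by_cases hc : c = ⟨m, by omega⟩
  · subst hc
    simp [degCol, sylvMat]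
  · rw [Matrix.updateCol_ne hc]
    have : (c : ℕ) ≠ m := fun h => hc (Fin.ext h)
    simp [sylvMat, this]

lemma colFun_degCol_eq_zero {R : Type*} [CommRing R] (A B : R[X]) (d m n : ℕ)
    (hA : A.natDegree ≤ d) (hB : B.natDegree ≤ d)
    (hn : n < m ∨ d ≤ n) : colFun A B d m (degCol A B m n) = 0 := by
  by_cases hbig : d + m < n
  · have : degCol A B m n = 0 := by
      funext r
      have hr := r.2
      simp only [degCol, Pi.zero_apply]
      split_ifs with h
      · rw [coeff_X_pow_mul']
        split_ifs
        · exact coeff_eq_zero_of_natDegree_lt (by omega)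
        · rfl
      · rw [coeff_X_pow_mul']
        split_ifs
        · exact coeff_eq_zero_of_natDegree_lt (by omega)
        · rfl
    rw [this, colFun_sum]; simp
  · obtain ⟨c, hc, hcn⟩ : ∃ c : Fin (2 * (m + 1)), c ≠ ⟨m, by omega⟩ ∧
        (if (c : ℕ) < m then (c : ℕ) else if (c : ℕ) = m then m + 0
          else d + ((c : ℕ) - (m + 1))) = n := by
      rcases hn with hn | hn
      · refine ⟨⟨n, by omega⟩, ?_, ?_⟩
        · intro h; have := Fin.mk.inj h; omega
        · simp [hn]
      · refine ⟨⟨m + 1 + (n - d), by omega⟩, ?_, ?_⟩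
        · intro h; have := Fin.mk.inj h; omega
        · simp only []
          rw [if_neg (by omega), if_neg (by omega)]; omega
    unfold colFun
    refine Matrix.det_zero_of_column_eq hc fun r => ?_
    rw [Matrix.updateCol_ne hc, Matrix.updateCol_self]
    simp only [sylvMat, degCol, Nat.add_sub_cancel]
    rw [hcn]

lemma symSubres_coeff {R : Type*} [CommRing R] (A B : R[X]) (d m n : ℕ) :
    (symSubres A B d (m + 1)).coeff n =
      if n < d - (m + 1) + 1 then (sylvMat A B d (m + 1) n).det else 0 := by
  simp [symSubres, coeff_C_mul, coeff_X_pow]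

lemma symSubres_coeff_eq_zero {R : Type*} [CommRing R] (A B : R[X]) (d m n : ℕ)
    (hA : A.natDegree ≤ d) (hB : B.natDegree ≤ d) (hn : d ≤ n + m) :
    (symSubres A B d (m + 1)).coeff n = 0 := by
  rw [symSubres_coeff]
  split_ifs
  · rw [← colFun_degCol]
    exact colFun_degCol_eq_zero A B d m _ hA hB (Or.inr (by omega))
  · rfl

lemma colFun_last {R : Type*} [CommRing R] (A B : R[X]) (d m : ℕ) (hm : 0 < m)
    (hA : A.natDegree ≤ d) (hB : B.natDegree ≤ d) :
    colFun A B d m (Pi.single ⟨2 * m + 1, by omega⟩ 1) =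
      -(A.coeff d * (symSubres A B d m).coeff 0) := by
  obtain ⟨p, rfl⟩ : ∃ p, m = p + 1 := ⟨m - 1, by omega⟩
  rw [symSubres_coeff, if_pos (by omega)]
  unfold colFun
  set M := (sylvMat A B d (p + 1 + 1) 0).updateCol ⟨p + 1, by omega⟩
    (Pi.single ⟨2 * (p + 1) + 1, by omega⟩ 1) with hM
  have h1 := Matrix.det_succ_column (n := 2 * (p + 1) + 1) M ⟨p + 1, by omega⟩
  refine h1.trans ?_
  rw [Finset.sum_eq_single (⟨2 * (p + 1) + 1, by omega⟩ : Fin (2 * (p + 1) + 1 + 1))]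
  rotate_left
  · intro b _ hb
    have : M b ⟨p + 1, by omega⟩ = 0 := by
      rw [hM, Matrix.updateCol_self, Pi.single_eq_of_ne hb]
    rw [this]; simp
  · simp
  have e1 : M ⟨2 * (p + 1) + 1, by omega⟩ ⟨p + 1, by omega⟩ = 1 := by
    rw [hM, Matrix.updateCol_self, Pi.single_eq_same]
  rw [e1]
  set N : Matrix (Fin (2 * (p + 1) + 1)) (Fin (2 * (p + 1) + 1)) R := Matrix.submatrix (α := R) M
    (Fin.succAbove (⟨2 * (p + 1) + 1, by omega⟩ : Fin (2 * (p + 1) + 1 + 1)))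
    (Fin.succAbove (⟨p + 1, by omega⟩ : Fin (2 * (p + 1) + 1 + 1))) with hN
  change (-1) ^ (2 * (p + 1) + 1 + (p + 1)) * 1 * N.det = _
  have entry : ∀ r c, N r c = (if (r : ℕ) < p + 2 then X ^ (r : ℕ) * A
      else X ^ ((r : ℕ) - (p + 2)) * B).coeff
        (if (c : ℕ) < p + 1 then (c : ℕ) else d + ((c : ℕ) - (p + 1))) := by
    intro r c
    have hr := r.2
    have hc := c.2
    rw [hN, Matrix.submatrix_apply, hM, Matrix.updateCol_ne (Fin.succAbove_ne _ _)]
    have hr' : ((Fin.succAbove (⟨2 * (p + 1) + 1, by omega⟩ : Fin (2 * (p + 1) + 1 + 1)) r : _) : ℕ)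
        = r := by
      rw [Fin.succAbove_of_castSucc_lt]
      · rfl
      · simp only [Fin.lt_def, Fin.val_castSucc]
        omega
    have hc' : ((Fin.succAbove (⟨p + 1, by omega⟩ : Fin (2 * (p + 1) + 1 + 1)) c : _) : ℕ)
        = if (c : ℕ) < p + 1 then (c : ℕ) else c + 1 := by
      simp only [Fin.succAbove, Fin.lt_def, Fin.val_castSucc]
      split_ifs <;> simp
    simp only [sylvMat]
    rw [hr', hc']
    congr 1
    split_ifs <;> omega
  have h2 := Matrix.det_succ_column (n := 2 * (p + 1)) N (Fin.last _)
  rw [h2]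
  rw [Finset.sum_eq_single (⟨p + 1, by omega⟩ : Fin (2 * (p + 1) + 1))]
  rotate_left
  · intro b _ hb
    have hb' : (b : ℕ) ≠ p + 1 := fun h => hb (Fin.ext h)
    have hb2 := b.2
    have : N b (Fin.last _) = 0 := by
      rw [entry, Fin.val_last, if_neg (by omega : ¬ (2 * (p + 1) < p + 1))]
      split_ifs with h
      · rw [coeff_X_pow_mul']
        split_ifs
        · exact coeff_eq_zero_of_natDegree_lt (by omega)
        · rfl
      · rw [coeff_X_pow_mul']
        split_ifs
        · exact coeff_eq_zero_of_natDegree_lt (by omega)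
        · rfl
    rw [this]; simp
  · simp
  have e2 : N ⟨p + 1, by omega⟩ (Fin.last _) = A.coeff d := by
    rw [entry, Fin.val_last, if_neg (by omega : ¬ (2 * (p + 1) < p + 1)), if_pos (by simp)]
    have : d + (2 * (p + 1) - (p + 1)) = d + (p + 1) := by omega
    simp only []
    rw [this, coeff_X_pow_mul]
  rw [e2]
  have e3 : Matrix.submatrix (α := R) N (Fin.succAbove (⟨p + 1, by omega⟩ : Fin (2 * (p + 1) + 1)))
      (Fin.succAbove (Fin.last (2 * (p + 1)))) = sylvMat A B d (p + 1) 0 := by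
    ext r c
    have hr := r.2
    have hc := c.2
    rw [Matrix.submatrix_apply, entry]
    have hr' : ((Fin.succAbove (⟨p + 1, by omega⟩ : Fin (2 * (p + 1) + 1)) r : _) : ℕ)
        = if (r : ℕ) < p + 1 then (r : ℕ) else r + 1 := by
      simp only [Fin.succAbove, Fin.lt_def, Fin.val_castSucc]
      split_ifs <;> simp
    rw [hr', Fin.succAbove_last, Fin.val_castSucc]
    simp only [sylvMat]
    have hcol : (if (c : ℕ) < p + 1 then (c : ℕ) else d + ((c : ℕ) - (p + 1))) =
        (if (c : ℕ) < p + 1 - 1 then (c : ℕ) else if (c : ℕ) = p + 1 - 1 then p + 1 - 1 + 0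
          else d + ((c : ℕ) - (p + 1))) := by
      split_ifs <;> omega
    rw [hcol]
    congr 1
    by_cases h : (r : ℕ) < p + 1
    · simp only [h, if_true]
      rw [if_pos (by omega)]
    · simp only [h, if_false]
      rw [if_neg (by omega)]
      congr 2
      omega
  rw [e3]
  have s1 : (-1 : R) ^ (2 * (p + 1) + 1 + (p + 1)) = (-1) ^ p := by
    rw [show 2 * (p + 1) + 1 + (p + 1) = p + 2 * (p + 2) by ring, pow_add, pow_mul]; simp
  have s2 : (-1 : R) ^ (p + 1 + (2 * (p + 1))) = -(-1) ^ p := by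
    rw [show p + 1 + (2 * (p + 1)) = p + 2 * (p + 1) + 1 by ring, pow_succ, pow_add, pow_mul]; simp
  simp only [Fin.val_last]
  rw [s1, s2]
  have s3 : ((-1 : R) ^ p) * (-1) ^ p = 1 := by rw [← mul_pow]; simp
  linear_combination (-(A.coeff d * (sylvMat A B d (p + 1) 0).det)) * s3

/-- Bezout-type relation for the symmetric subresultants. -/
lemma symSubres_bezout {R : Type*} [CommRing R] (A B : R[X]) (d m : ℕ)
    (hA : A.natDegree ≤ d) (hB : B.natDegree ≤ d) (hmd : m ≤ d) :
    ∃ U V : R[X], U.natDegree ≤ m ∧ V.natDegree ≤ m ∧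
      X ^ m * symSubres A B d (m + 1) = U * A + V * B ∧
      (0 < m → V.coeff m = -(A.coeff d * (symSubres A B d m).coeff 0)) := by
  let f : ℕ → R := fun i => if h : i < 2 * (m + 1) then colFun A B d m (Pi.single ⟨i, h⟩ 1) else 0
  refine ⟨∑ i ∈ Finset.range (m + 1), C (f i) * X ^ i,
    ∑ i ∈ Finset.range (m + 1), C (f (m + 1 + i)) * X ^ i, ?_, ?_, ?_, ?_⟩
  · refine natDegree_sum_le_of_forall_le _ _ fun i hi => ?_
    have := Finset.mem_range.1 hi
    exact (natDegree_C_mul_X_pow_le _ _).trans (by omega)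
  · refine natDegree_sum_le_of_forall_le _ _ fun i hi => ?_
    have := Finset.mem_range.1 hi
    exact (natDegree_C_mul_X_pow_le _ _).trans (by omega)
  · ext n
    have key : ((∑ i ∈ Finset.range (m + 1), C (f i) * X ^ i) * A +
        (∑ i ∈ Finset.range (m + 1), C (f (m + 1 + i)) * X ^ i) * B).coeff n =
        colFun A B d m (degCol A B m n) := by
      rw [colFun_sum]
      have e : ∀ r : Fin (2 * (m + 1)), colFun A B d m (Pi.single r 1) * degCol A B m n r =
          (fun i : ℕ => f i * (if i < m + 1 then X ^ i * A else X ^ (i - (m + 1)) * B).coeff n) r := by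
        intro r
        simp [f, degCol]
      have e2 := Fin.sum_univ_eq_sum_range (fun i : ℕ => f i *
          (if i < m + 1 then X ^ i * A else X ^ (i - (m + 1)) * B).coeff n) (2 * (m + 1))
      rw [Finset.sum_congr rfl (fun r _ => e r)]
      refine Eq.trans ?_ e2.symm
      rw [two_mul, Finset.sum_range_add _ (m + 1) (m + 1), coeff_add, Finset.sum_mul, Finset.sum_mul, finsetSum_coeff,
        finsetSum_coeff]
      congr 1
      · refine Finset.sum_congr rfl fun i hi => ?_
        have := Finset.mem_range.1 hi
        rw [if_pos this, mul_assoc, coeff_C_mul]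
      · refine Finset.sum_congr rfl fun i hi => ?_
        rw [if_neg (by omega), mul_assoc, coeff_C_mul]
        simp
    rw [key, coeff_X_pow_mul']
    split_ifs with h
    · obtain ⟨l, rfl⟩ := Nat.exists_eq_add_of_le h
      rw [Nat.add_sub_cancel_left]
      by_cases hl : d ≤ l + m
      · rw [symSubres_coeff_eq_zero A B d m l hA hB hl,
          colFun_degCol_eq_zero A B d m _ hA hB (Or.inr (by omega))]
      · rw [symSubres_coeff, if_pos (by omega), colFun_degCol]
    · rw [colFun_degCol_eq_zero A B d m _ hA hB (Or.inl (by omega))]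
  · intro hm
    rw [← colFun_last A B d m hm hA hB]
    simp only [finsetSum_coeff, coeff_C_mul, coeff_X_pow]
    simp only [mul_ite, mul_one, mul_zero, Finset.sum_ite_eq, Finset.mem_range]
    rw [if_pos (by omega)]
    simp only [f]
    rw [dif_pos (by omega)]
    congr 3
    omega

lemma symSubres_one {R : Type*} [CommRing R] (A B : R[X]) (d : ℕ)
    (hA : A.natDegree ≤ d) (hB : B.natDegree ≤ d) :
    symSubres A B d 1 = C (B.coeff d) * A - C (A.coeff d) * B := by
  have hdet : ∀ n, (sylvMat A B d 1 n).det = A.coeff n * B.coeff d - A.coeff d * B.coeff n := by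
    intro n
    have := Matrix.det_fin_two (sylvMat A B d 1 n)
    rw [this]
    simp [sylvMat]
  ext n
  rw [coeff_sub, coeff_C_mul, coeff_C_mul]
  by_cases h : d ≤ n
  · rw [symSubres_coeff_eq_zero A B d 0 n hA hB (by omega)]
    rcases h.eq_or_lt with rfl | h
    · ring
    · rw [coeff_eq_zero_of_natDegree_lt (hA.trans_lt h), coeff_eq_zero_of_natDegree_lt (hB.trans_lt h)]
      ring
  · rw [symSubres_coeff, if_pos (by omega), hdet]; ring

lemma X_pow_dvd_of_mul {R : Type*} [CommRing R] [IsDomain R] {A a T : R[X]} {n : ℕ}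
    (h0 : A.coeff 0 ≠ 0) (h : A * a = X ^ n * T) : X ^ n ∣ a := by
  refine prime_X.pow_dvd_of_dvd_mul_left n ?_ ⟨T, h⟩
  rwa [X_dvd_iff]

lemma monomial_of_mul {R : Type*} [CommRing R] [IsDomain R] {A a T : R[X]} {n d : ℕ} {t : R}
    (h0 : A.coeff 0 ≠ 0) (hA : A.natDegree = d) (hT : T.natDegree ≤ d)
    (ht : T.coeff d = A.coeff d * t)
    (h : A * a = X ^ n * T) : a = C t * X ^ n := by
  obtain ⟨b, rfl⟩ := X_pow_dvd_of_mul h0 h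
  have hA0 : A ≠ 0 := by rintro rfl; simp at h0
  have h' : A * b = T := by
    refine mul_left_cancel₀ (pow_ne_zero n X_ne_zero) (?_ : X ^ n * (A * b) = X ^ n * T)
    rw [← h]; ring
  have hb : b.natDegree = 0 := by
    by_cases hb0 : b = 0
    · simp [hb0]
    · have := natDegree_mul hA0 hb0
      rw [h'] at this
      omega
  obtain ⟨x, rfl⟩ := natDegree_eq_zero.1 hb
  have hl : A.coeff d ≠ 0 := by
    rw [← hA]; exact leadingCoeff_ne_zero.2 hA0
  have : x = t := by
    rw [← h', coeff_mul_C] at ht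
    exact mul_left_cancel₀ hl ht
  rw [this, mul_comm]

lemma srem_unique {F : Type*} [Field F] {P T Q₁ Q₂ R₁ R₂ : F[X]} {β n : ℕ}
    (hT0 : T.coeff 0 ≠ 0) (hT : T.natDegree = n)
    (h1 : P = Q₁ * T + X ^ β * R₁) (h2 : P = Q₂ * T + X ^ β * R₂)
    (hR1 : R₁.degree < (n : WithBot ℕ)) (hR2 : R₂.degree < (n : WithBot ℕ)) : R₁ = R₂ := by
  have hT00 : T ≠ 0 := by rintro rfl; simp at hT0
  have h : T * (Q₂ - Q₁) = X ^ β * (R₁ - R₂) := by linear_combination h1 - h2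
  obtain ⟨q, hq⟩ := X_pow_dvd_of_mul hT0 h
  have h' : T * q = R₁ - R₂ := by
    refine mul_left_cancel₀ (pow_ne_zero β X_ne_zero) (?_ : X ^ β * (T * q) = X ^ β * (R₁ - R₂))
    rw [← h, hq]; ring
  have hd : (R₁ - R₂).degree < (n : WithBot ℕ) :=
    (degree_sub_le _ _).trans_lt (max_lt hR1 hR2)
  have : R₁ - R₂ = 0 := by
    refine eq_zero_of_dvd_of_degree_lt ⟨q, h'.symm⟩ ?_
    rwa [degree_eq_natDegree hT00, hT]
  exact sub_eq_zero.1 this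

/-- Core identity for `j > 0`. -/
lemma core_pos {R : Type*} [CommRing R] [IsDomain R] (A B T : R[X]) (d i α β : ℕ)
    (hA : A.natDegree = d) (hB : B.natDegree = d) (hA0 : A.coeff 0 ≠ 0)
    (hSj : (symSubres A B d (i + 1)).natDegree + (i + 1) = d)
    (hβ : 0 < β) (hT : symSubres A B d (i + 2) = X ^ α * T) (hT0 : T.coeff 0 ≠ 0)
    (hTd : T.natDegree + α + β + (i + 1) = d) :
    ∃ Q : R[X], C (T.leadingCoeff * (symSubres A B d (i + 1 + α + β)).coeff 0) *
        symSubres A B d (i + 1) =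
      Q * T + X ^ β * -(C ((symSubres A B d (i + 1)).leadingCoeff *
        (symSubres A B d (i + 1)).coeff 0) * symSubres A B d (i + 1 + α + β + 1)) := by
  obtain ⟨U, V, hU, hV, hUV, -⟩ := symSubres_bezout A B d i hA.le hB.le (by omega)
  obtain ⟨U', V', hU', hV', hUV', hc'⟩ := symSubres_bezout A B d (i + 1) hA.le hB.le (by omega)
  obtain ⟨U'', V'', hU'', hV'', hUV'', hc''⟩ :=
    symSubres_bezout A B d (i + 1 + α + β) hA.le hB.le (by omega)
  specialize hc' (by omega)
  specialize hc'' (by omega)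
  have hTne : T ≠ 0 := by rintro rfl; simp at hT0
  have hSkd : ∀ n, d ≤ n + (i + 1 + α + β) → (symSubres A B d (i + 1 + α + β + 1)).coeff n = 0 :=
    fun n hn => symSubres_coeff_eq_zero A B d _ n hA.le hB.le hn
  rw [show i + 1 + 1 = i + 2 by rfl, hT] at hUV'
  set S := symSubres A B d (i + 1) with hS
  set Sk := symSubres A B d (i + 1 + α + β + 1) with hSk
  set s := (symSubres A B d (i + 1 + α + β)).coeff 0 with hs
  have hSkn : Sk = 0 ∨ Sk.natDegree + (i + 1 + α + β) < d := by
    by_cases h0 : Sk = 0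
    · exact Or.inl h0
    · refine Or.inr (not_le.1 fun hle => leadingCoeff_ne_zero.2 h0 (hSkd _ hle))
  have hd1 : (X * V * (X ^ α * T)).natDegree < d := by
    refine (natDegree_mul_le.trans (add_le_add natDegree_mul_le natDegree_mul_le)).trans_lt ?_
    rw [natDegree_X, natDegree_X_pow]
    omega
  have hd2 : V' * (X ^ β * Sk) = 0 ∨ (V' * (X ^ β * Sk)).natDegree < d := by
    rcases hSkn with h | h
    · left; rw [h]; simp
    · right
      refine (natDegree_mul_le.trans (add_le_add le_rfl natDegree_mul_le)).trans_lt ?_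
      rw [natDegree_X_pow]
      omega
  have hd2' : (V' * (X ^ β * Sk)).natDegree ≤ d ∧ (V' * (X ^ β * Sk)).coeff d = 0 := by
    rcases hd2 with h | h
    · rw [h]; simp
    · exact ⟨h.le, coeff_eq_zero_of_natDegree_lt h⟩
  have hW : U * V' - U' * V = C (-(S.leadingCoeff * S.coeff 0)) * X ^ i := by
    refine monomial_of_mul (T := V' * S - X * V * (X ^ α * T)) hA0 hA ?_ ?_ ?_
    · refine (natDegree_sub_le _ _).trans (max_le ?_ ?_)
      · exact natDegree_mul_le.trans (by omega)
      · exact hd1.le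
    · have h1 := coeff_mul_add_eq_of_natDegree_le hV' (le_refl S.natDegree)
      rw [show i + 1 + S.natDegree = d by omega, hc'] at h1
      rw [coeff_sub, h1, coeff_eq_zero_of_natDegree_lt hd1, leadingCoeff]
      ring
    · linear_combination V' * (-hUV) + V * hUV'
  have ha : U' * V'' - U'' * V' = C (-(T.leadingCoeff * s)) * X ^ (i + 1 + α) := by
    refine monomial_of_mul (T := V'' * T - V' * (X ^ β * Sk)) hA0 hA ?_ ?_ ?_
    · refine (natDegree_sub_le _ _).trans (max_le ?_ hd2'.1)
      exact natDegree_mul_le.trans (by omega)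
    · have h1 := coeff_mul_add_eq_of_natDegree_le hV'' (le_refl T.natDegree)
      rw [show i + 1 + α + β + T.natDegree = d by omega, hc''] at h1
      rw [coeff_sub, h1, hd2'.2, leadingCoeff]
      ring
    · linear_combination V'' * (-hUV') + V' * hUV''
  have hmain : X ^ (i + 1 + α) * (T * (U * V'' - U'' * V)) =
      X ^ (i + 1 + α) * (X ^ i * -(C (T.leadingCoeff * s) * S + X ^ β * (C (S.leadingCoeff * S.coeff 0) * Sk))) := by
    have e : X ^ (i + 1 + α + β) * Sk * (U * V' - U' * V) =
        X ^ (i + 1) * (X ^ α * T) * (U * V'' - U'' * V) - X ^ i * S * (U' * V'' - U'' * V') := by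
      rw [hUV, hUV', hUV'']; ring
    rw [hW, ha, C_neg, C_neg] at e
    linear_combination -e
  have hmainCancelled := mul_left_cancel₀ (pow_ne_zero _ X_ne_zero) hmain
  obtain ⟨q, hq⟩ := X_pow_dvd_of_mul hT0 hmainCancelled
  refine ⟨-q, ?_⟩
  rw [hq] at hmainCancelled
  refine mul_left_cancel₀ (pow_ne_zero i X_ne_zero) (?_ : X ^ i * _ = X ^ i * _)
  linear_combination hmainCancelled

/-- Core identity for `j = 0`. -/
lemma core_zero {R : Type*} [CommRing R] [IsDomain R] (A B T : R[X]) (d α β : ℕ)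
    (hA : A.natDegree = d) (hB : B.natDegree = d) (hA0 : A.coeff 0 ≠ 0) (hB0 : B.coeff 0 ≠ 0) (hβ : 0 < β)
    (hT : symSubres A B d 1 = X ^ α * T) (hT0 : T.coeff 0 ≠ 0)
    (hTd : T.natDegree + α + β = d) :
    ∃ Q : R[X], C (T.leadingCoeff * (symSubres A B d (α + β)).coeff 0) * B =
      Q * T + X ^ β * -(C (B.coeff d) * symSubres A B d (α + β + 1)) := by
  obtain ⟨U, V, hU, hV, hUV, hc⟩ := symSubres_bezout A B d (α + β) hA.le hB.le (by omega)
  specialize hc (by omega)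
  rw [symSubres_one A B d hA.le hB.le] at hT
  have hSkd : ∀ n, d ≤ n + (α + β) → (symSubres A B d (α + β + 1)).coeff n = 0 :=
    fun n hn => symSubres_coeff_eq_zero A B d _ n hA.le hB.le hn
  have hTne : T ≠ 0 := by rintro rfl; simp at hT0
  set Sk := symSubres A B d (α + β + 1) with hSk
  set s := (symSubres A B d (α + β)).coeff 0 with hs
  have hSkn : Sk = 0 ∨ Sk.natDegree + (α + β) < d := by
    by_cases h0 : Sk = 0
    · exact Or.inl h0
    · refine Or.inr (not_le.1 fun hle => leadingCoeff_ne_zero.2 h0 (hSkd _ hle))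
  have hAd : A.coeff d ≠ 0 := by
    rw [← hA]
    exact leadingCoeff_ne_zero.2 (by rintro rfl; simp at hA0)
  have hBd : B.coeff d ≠ 0 := by
    rw [← hB]
    exact leadingCoeff_ne_zero.2 (by rintro rfl; simp at hB0)
  have hd2 : (C (B.coeff d) * (X ^ β * Sk)).natDegree ≤ d ∧
      (C (B.coeff d) * (X ^ β * Sk)).coeff d = 0 := by
    rcases hSkn with h | h
    · rw [h]; simp
    · have : (C (B.coeff d) * (X ^ β * Sk)).natDegree < d := by
        refine ((natDegree_C_mul_le _ _).trans natDegree_mul_le).trans_lt ?_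
        rw [natDegree_X_pow]
        omega
      exact ⟨this.le, coeff_eq_zero_of_natDegree_lt this⟩
  have hTT : (C (B.coeff d) * (X ^ β * Sk) - U * T).natDegree ≤ d := by
    refine (natDegree_sub_le _ _).trans (max_le hd2.1 ?_)
    exact natDegree_mul_le.trans (by omega)
  have hmul : B * (C (A.coeff d) * U + C (B.coeff d) * V) =
      X ^ α * (C (B.coeff d) * (X ^ β * Sk) - U * T) := by
    linear_combination (-U) * hT - C (B.coeff d) * hUV
  have hu : U.coeff (α + β) = B.coeff d * s := by
    have had : (C (A.coeff d) * U + C (B.coeff d) * V).natDegree ≤ α + β :=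
      (natDegree_add_le _ _).trans
        (max_le ((natDegree_C_mul_le _ _).trans hU) ((natDegree_C_mul_le _ _).trans hV))
    have h1 := coeff_mul_add_eq_of_natDegree_le hB.le had
    have h2 : (X ^ α * (C (B.coeff d) * (X ^ β * Sk) - U * T)).coeff (d + (α + β)) = 0 := by
      refine coeff_eq_zero_of_natDegree_lt (natDegree_mul_le.trans_lt ?_)
      rw [natDegree_X_pow]
      omega
    rw [hmul, h2] at h1
    have h3 := (mul_eq_zero.1 h1.symm).resolve_left hBd
    rw [coeff_add, coeff_C_mul, coeff_C_mul, hc] at h3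
    refine mul_left_cancel₀ hAd ?_
    linear_combination h3
  have ha : C (A.coeff d) * U + C (B.coeff d) * V = C (-(T.leadingCoeff * s)) * X ^ α := by
    refine monomial_of_mul hB0 hB hTT ?_ hmul
    have h1 := coeff_mul_add_eq_of_natDegree_le hU (le_refl T.natDegree)
    rw [show α + β + T.natDegree = d by omega, hu] at h1
    rw [coeff_sub, hd2.2, h1, leadingCoeff]
    ring
  refine ⟨U, ?_⟩
  refine mul_left_cancel₀ (pow_ne_zero α X_ne_zero) (?_ : X ^ α * _ = X ^ α * _)
  rw [ha, C_neg] at hmul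
  linear_combination -hmul

/-- Structure theorem, part 3: if `(S_j, S_{j+1})` is `(α,β)`-defective, then
`lc(S_j)·S_j(0)·S_{j+α+β+1} = -lc(S_{j+1})·S_{j+α+β}(0)·srem(S_j, S_{j+1})
  = -srem(lc(S_{j+1})·S_{j+α+β}(0)·S_j, S_{j+1})` when `j > 0`, and
`b_d·S_{α+β+1} = -srem(lc(S_1)·S_{α+β}(0)·S_0, S_1)` when `j = 0`.  Symmetric remainders,
which live over the fraction field of `D` (inside `ℂ`), are characterized by the defining
property of the symmetric division. -/
theorem structure_theorem_next (D : Subring ℂ) (A B : Polynomial D) (d j α β : ℕ)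
    (hAdeg : A.degree = (d : ℕ)) (hBdeg : B.degree = (d : ℕ))
    (hAval : A.coeff 0 ≠ 0) (hBval : B.coeff 0 ≠ 0)
    (hdef : IsDefective A B d j α β) :
    (0 < j →
      (∀ Q R : Polynomial ℂ,
        Q.degree = ((α + β : ℕ) : WithBot ℕ) →
        R.degree < ((d - j - (α + β) : ℕ) : WithBot ℕ) →
        (symSubres A B d j).map D.subtype =
          Q * ((symSubres A B d (j + 1)).map D.subtype /ₘ X ^ α) + X ^ β * R →
        (C ((symSubres A B d j).leadingCoeff * (symSubres A B d j).coeff 0) *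
            symSubres A B d (j + α + β + 1)).map D.subtype =
          - C (D.subtype ((symSubres A B d (j + 1)).leadingCoeff *
              (symSubres A B d (j + α + β)).coeff 0)) * R) ∧
      (∀ Q R : Polynomial ℂ,
        Q.degree = ((α + β : ℕ) : WithBot ℕ) →
        R.degree < ((d - j - (α + β) : ℕ) : WithBot ℕ) →
        (C ((symSubres A B d (j + 1)).leadingCoeff * (symSubres A B d (j + α + β)).coeff 0) *
            symSubres A B d j).map D.subtype =
          Q * ((symSubres A B d (j + 1)).map D.subtype /ₘ X ^ α) + X ^ β * R →
        (C ((symSubres A B d j).leadingCoeff * (symSubres A B d j).coeff 0) *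
            symSubres A B d (j + α + β + 1)).map D.subtype = - R)) ∧
    (j = 0 →
      ∀ Q R : Polynomial ℂ,
        Q.degree = ((α + β : ℕ) : WithBot ℕ) →
        R.degree < ((d - (α + β) : ℕ) : WithBot ℕ) →
        (C ((symSubres A B d 1).leadingCoeff * (symSubres A B d (α + β)).coeff 0) *
            symSubres A B d 0).map D.subtype =
          Q * ((symSubres A B d 1).map D.subtype /ₘ X ^ α) + X ^ β * R →
        (C (B.coeff d) * symSubres A B d (α + β + 1)).map D.subtype = - R) := by
  obtain ⟨hj0, hjd, hne, hval, hdeg⟩ := hdef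
  have hA : A.natDegree = d := natDegree_eq_of_degree_eq_some hAdeg
  have hB : B.natDegree = d := natDegree_eq_of_degree_eq_some hBdeg
  obtain ⟨T, hT⟩ : X ^ α ∣ symSubres A B d (j + 1) := by
    rw [X_pow_dvd_iff]
    intro n hn
    exact coeff_eq_zero_of_lt_natTrailingDegree (by omega)
  have hTne : T ≠ 0 := by
    rintro rfl
    exact hne (by rw [hT, mul_zero])
  have hT0 : T.coeff 0 ≠ 0 := by
    have h1 : (symSubres A B d (j + 1)).coeff α ≠ 0 := by
      rw [← hval]
      exact trailingCoeff_nonzero_iff_nonzero.2 hne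
    have h2 := coeff_X_pow_mul T α 0
    rw [zero_add, ← hT] at h2
    rwa [← h2]
  have hTd : T.natDegree + α = (symSubres A B d (j + 1)).natDegree := by
    rw [hT, natDegree_X_pow_mul α hTne]
  have hlc : (symSubres A B d (j + 1)).leadingCoeff = T.leadingCoeff := by
    rw [hT, leadingCoeff_mul, leadingCoeff_X_pow, one_mul]
  have hβ : 0 < β := by
    by_contra h
    exact leadingCoeff_ne_zero.2 hne
      (symSubres_coeff_eq_zero A B d j _ hA.le hB.le (by omega))
  have hdiv : (symSubres A B d (j + 1)).map D.subtype /ₘ X ^ α = T.map D.subtype := by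
    rw [hT, Polynomial.map_mul, Polynomial.map_pow, map_X]
    exact mul_divByMonic_cancel_left _ (monic_X_pow α)
  have hinj : Function.Injective D.subtype := Subtype.val_injective
  have hmT0 : (T.map D.subtype).coeff 0 ≠ 0 := by
    rw [coeff_map]
    exact fun h => hT0 (hinj (by rw [h, map_zero]))
  have hmTd : (T.map D.subtype).natDegree = d - j - (α + β) := by
    rw [natDegree_map_eq_of_injective hinj]; omega
  have hRdeg : ∀ g : D, (-((C g * symSubres A B d (j + α + β + 1)).map D.subtype)).degree <
      ((d - j - (α + β) : ℕ) : WithBot ℕ) := by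
    intro g
    rw [degree_neg, degree_lt_iff_coeff_zero]
    intro n hn
    rw [coeff_map, coeff_C_mul,
      symSubres_coeff_eq_zero A B d (j + α + β) n hA.le hB.le (by omega), mul_zero, map_zero]
  have fin : ∀ (g K : D) (P Q₀ : Polynomial D), C K * P = Q₀ * T + X ^ β *
        -(C g * symSubres A B d (j + α + β + 1)) →
      ∀ Q R : Polynomial ℂ, R.degree < ((d - j - (α + β) : ℕ) : WithBot ℕ) →
        (C K * P).map D.subtype = Q * (T.map D.subtype) + X ^ β * R →
        (C g * symSubres A B d (j + α + β + 1)).map D.subtype = -R := by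
    intro g K P Q₀ h Q R hR hQ
    have h2 : (C K * P).map D.subtype = Q₀.map D.subtype * T.map D.subtype + X ^ β *
        -((C g * symSubres A B d (j + α + β + 1)).map D.subtype) := by
      rw [h]
      simp only [Polynomial.map_add, Polynomial.map_mul, Polynomial.map_pow, map_X,
        Polynomial.map_neg]
    have := srem_unique hmT0 hmTd hQ h2 hR (hRdeg g)
    rw [this, neg_neg]
  refine ⟨fun hj => ?_, fun hj => ?_⟩
  · obtain ⟨i, rfl⟩ : ∃ i, j = i + 1 := ⟨j - 1, by omega⟩
    obtain ⟨Q₀, hQ₀⟩ := core_pos A B T d i α β hA hB hAval hjd hβ hT hT0 (by omega)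
    rw [hdiv, hlc]
    refine ⟨fun Q R _ hR h => ?_, fun Q R _ hR h => fin _ _ _ Q₀ hQ₀ Q R hR h⟩
    set K := T.leadingCoeff * (symSubres A B d (i + 1 + α + β)).coeff 0 with hK
    rw [neg_mul]
    refine fin _ _ _ Q₀ hQ₀ (C (D.subtype K) * Q) _ ?_ ?_
    · refine lt_of_le_of_lt ?_ hR
      rw [← smul_eq_C_mul]
      exact degree_smul_le _ _
    · rw [Polynomial.map_mul, map_C, h]; ring
  · subst hj
    simp only [zero_add, Nat.sub_zero] at *
    obtain ⟨Q₀, hQ₀⟩ := core_zero A B T d α β hA hB hAval hBval hβ hT hT0 (by omega)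
    intro Q R _ hR h
    rw [hdiv, hlc] at h
    have h0 : symSubres A B d 0 = B := by simp [symSubres]
    rw [h0] at h
    exact fin _ _ _ Q₀ hQ₀ Q R hR h
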